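/- Suppose each A_k has full column rank with λ_min(A_k^T A_k) ≥ σ_k² for constants σ_k > 0, and let σ_min := min_k σ_k. Then for every r ≥ 0 the cyclic exact BCD iterates satisfy Δ^{(r+1)} ≤ 3 · max{ Δ^{(0)}, 2 R_0² · (1/σ_min²) · log²(2NK) · (L² + L_max²) } / (r+1), where Δ^{(r)} := f(x^{(r)}) − f*. -/

import Mathlib

open Finset

/-- Squared Euclidean norm of a vector in `ℝ^n`. -/
noncomputable def sqnorm {n : ℕ} (v : Fin n → ℝ) : ℝ := ∑ i, v i ^ 2

/-- Euclidean inner product on `ℝ^n`. -/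
noncomputable def dotp {n : ℕ} (u v : Fin n → ℝ) : ℝ := ∑ i, u i * v i

/-- `λ_max(AᵀA)` for a real matrix `A`, characterized as the maximum of `‖Av‖²`
over unit vectors `v`. -/
noncomputable def lamMaxQ {M N : ℕ} (A : Matrix (Fin M) (Fin N) ℝ) : ℝ :=
  sSup {r : ℝ | ∃ v : Fin N → ℝ, sqnorm v = 1 ∧ r = sqnorm (A.mulVec v)}

/-- `λ_min(AᵀA)` for a real matrix `A`, characterized as the minimum of `‖Av‖²`
over unit vectors `v`. -/
noncomputable def lamMinQ {M N : ℕ} (A : Matrix (Fin M) (Fin N) ℝ) : ℝ :=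
  sInf {r : ℝ | ∃ v : Fin N → ℝ, sqnorm v = 1 ∧ r = sqnorm (A.mulVec v)}

/-- `λ_max(AᵀA)` for the concatenated matrix `A = [A_1 ⋯ A_K]`, acting on block
vectors. -/
noncomputable def lamMaxBlock {K M N : ℕ} (A : Fin K → Matrix (Fin M) (Fin N) ℝ) : ℝ :=
  sSup {r : ℝ | ∃ v : Fin K → Fin N → ℝ, (∑ k, sqnorm (v k)) = 1 ∧
    r = sqnorm (∑ k, (A k).mulVec (v k))}

/-- Maximum of a finite family of reals indexed by `Fin K`, `K ≥ 1`. -/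
noncomputable def maxOf {K : ℕ} (hK : 1 ≤ K) (P : Fin K → ℝ) : ℝ :=
  Finset.univ.sup' (Finset.univ_nonempty_iff.mpr ⟨⟨0, hK⟩⟩) P

/-- Minimum of a finite family of reals indexed by `Fin K`, `K ≥ 1`. -/
noncomputable def minOf {K : ℕ} (hK : 1 ≤ K) (P : Fin K → ℝ) : ℝ :=
  Finset.univ.inf' (Finset.univ_nonempty_iff.mpr ⟨⟨0, hK⟩⟩) P

/-- The residual `Σ_k A_k x_k − b`. -/
noncomputable def resid {K M N : ℕ} (A : Fin K → Matrix (Fin M) (Fin N) ℝ)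
    (b : Fin M → ℝ) (x : Fin K → Fin N → ℝ) : Fin M → ℝ :=
  (∑ k, (A k).mulVec (x k)) - b

/-- The smooth part `g(x) = (1/2)‖Σ_k A_k x_k − b‖²`. -/
noncomputable def gq {K M N : ℕ} (A : Fin K → Matrix (Fin M) (Fin N) ℝ)
    (b : Fin M → ℝ) (x : Fin K → Fin N → ℝ) : ℝ :=
  (1 / 2) * sqnorm (resid A b x)

/-- The objective `f(x) = g(x) + Σ_k h_k(x_k)`. -/
noncomputable def fq {K M N : ℕ} (A : Fin K → Matrix (Fin M) (Fin N) ℝ)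
    (b : Fin M → ℝ) (h : Fin K → (Fin N → ℝ) → ℝ) (x : Fin K → Fin N → ℝ) : ℝ :=
  gq A b x + ∑ k, h k (x k)

/-- The partial gradient `∇_k g(x) = A_kᵀ (Σ_j A_j x_j − b)`. -/
noncomputable def gradk {K M N : ℕ} (A : Fin K → Matrix (Fin M) (Fin N) ℝ)
    (b : Fin M → ℝ) (x : Fin K → Fin N → ℝ) (k : Fin K) : Fin N → ℝ :=
  ((A k).transpose).mulVec (resid A b x)

/-- The intermediate point `w_k^{(r+1)}` of the cycle: blocks `j < k` come from
`x^{(r+1)} = xp`, the remaining blocks from `x^{(r)} = x`. -/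
def wpt {K N : ℕ} (x xp : Fin K → Fin N → ℝ) (k : Fin K) : Fin K → Fin N → ℝ :=
  fun j => if j < k then xp j else x j

/-- The objective of the `k`-th BCPG prox subproblem at the point
`w_k^{(r+1)} = wpt x xp k`, evaluated at candidate block `y`. -/
noncomputable def bcpgObj {K M N : ℕ} (A : Fin K → Matrix (Fin M) (Fin N) ℝ)
    (b : Fin M → ℝ) (h : Fin K → (Fin N → ℝ) → ℝ) (P : Fin K → ℝ)
    (x xp : Fin K → Fin N → ℝ) (k : Fin K) (y : Fin N → ℝ) : ℝ :=
  dotp (gradk A b (wpt x xp k) k) (y - x k) + (P k / 2) * sqnorm (y - x k) + h k y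

/-- One cycle of cyclic BCPG: `xp = x^{(r+1)}` is obtained from `x = x^{(r)}`
by letting, for `k = 1,…,K`, the `k`-th block minimize the prox subproblem at
`w_k^{(r+1)}` over `X_k`. -/
def BCPGStep {K M N : ℕ} (A : Fin K → Matrix (Fin M) (Fin N) ℝ)
    (b : Fin M → ℝ) (h : Fin K → (Fin N → ℝ) → ℝ)
    (X : Fin K → Set (Fin N → ℝ)) (P : Fin K → ℝ)
    (x xp : Fin K → Fin N → ℝ) : Prop :=
  ∀ k : Fin K, xp k ∈ X k ∧ ∀ y ∈ X k,
    bcpgObj A b h P x xp k (xp k) ≤ bcpgObj A b h P x xp k y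

/-- One cycle of cyclic exact BCD: `xp = x^{(r+1)}` is obtained from
`x = x^{(r)}` by letting, for `k = 1,…,K`, the `k`-th block minimize
`f(x_1^{(r+1)},…,x_{k−1}^{(r+1)}, ·, x_{k+1}^{(r)},…,x_K^{(r)})` over `X_k`. -/
def BCDStep {K M N : ℕ} (A : Fin K → Matrix (Fin M) (Fin N) ℝ)
    (b : Fin M → ℝ) (h : Fin K → (Fin N → ℝ) → ℝ)
    (X : Fin K → Set (Fin N → ℝ))
    (x xp : Fin K → Fin N → ℝ) : Prop :=
  ∀ k : Fin K, xp k ∈ X k ∧ ∀ y ∈ X k,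
    fq A b h (Function.update (wpt x xp k) k (xp k)) ≤
      fq A b h (Function.update (wpt x xp k) k y)

/-!
Let `x⁺` be the result of one sweep from `x`, and let `y` be a minimiser. Each block subproblem is
convex and quadratic in `A_k x_k` up to `h_k`, so the sweep decreases `f` by at least
`½ ∑ ‖A_k (x_k⁺ - x_k)‖²`. When the block `i` is updated only the blocks `j > i` are stale; adding
up the first-order optimality conditions of all blocks therefore bounds `f x⁺ - f y` by the strictly
upper triangular sum `∑_{i < j} ⟪A_i (x_i⁺ - y_i), A_j (x_j⁺ - x_j)⟫`.

A rectangular sum over disjoint sets of blocks is an inner product of two vectors, controlled by `L`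
whatever the size of the rectangle. Halving the index set repeatedly cuts the triangle into `log₂ K`
layers of rectangles, which is why `log K` rather than `K` enters the rate. Together the two
estimates read `(Δ⁺)² ≤ C (Δ - Δ⁺)`, and this recursion forces `Δ = O(1 / r)`.
-/

open scoped RealInnerProductSpace

section LinearOrder

variable {ι : Type*} [LinearOrder ι]

theorem sum_filter_le_sub_filter_lt {G : Type*} [AddCommGroup G]
    (Φ : Finset ι → G) (s : Finset ι) :
    ∑ k ∈ s, (Φ {j ∈ s | j ≤ k} - Φ {j ∈ s | j < k}) = Φ s - Φ ∅ := by
  induction s using Finset.induction_on_max with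
  | empty => simp
  | insert a s ha ih =>
    have le_max : {j ∈ insert a s | j ≤ a} = insert a s :=
      filter_true_of_mem <| forall_mem_insert _ _ _ |>.mpr ⟨le_rfl, fun j hj => (ha j hj).le⟩
    have lt_max : {j ∈ insert a s | j < a} = s := by
      rw [filter_insert, if_neg (lt_irrefl a), filter_true_of_mem ha]
    have old : ∀ k ∈ s, Φ {j ∈ insert a s | j ≤ k} - Φ {j ∈ insert a s | j < k} =
        Φ {j ∈ s | j ≤ k} - Φ {j ∈ s | j < k} := fun k hk => by
      rw [filter_insert, filter_insert, if_neg (ha k hk).not_ge, if_neg (ha k hk).not_gt]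
    rw [sum_insert fun h => (ha a h).false, le_max, lt_max, sum_congr rfl old, ih]
    abel

theorem exists_lower_subset_card_eq (s : Finset ι) {n : ℕ} (hn : n ≤ #s) :
    ∃ t ⊆ s, #t = n ∧ ∀ i ∈ t, ∀ j ∈ s \ t, i < j := by
  induction s using Finset.induction_on_max with
  | empty => exact ⟨∅, Subset.rfl, by simpa [eq_comm] using hn, by simp⟩
  | insert a s ha ih =>
    rw [card_insert_of_notMem fun h => (ha a h).false] at hn
    obtain hn | hn := Nat.le_succ_iff.mp hn
    · obtain ⟨t, hts, htn, hlt⟩ := ih hn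
      refine ⟨t, hts.trans (subset_insert a s), htn, fun i hi j hj => ?_⟩
      obtain ⟨hj, hjt⟩ := mem_sdiff.mp hj
      obtain rfl | hj := mem_insert.mp hj
      · exact ha i (hts hi)
      · exact hlt i hi j (mem_sdiff.mpr ⟨hj, hjt⟩)
    · refine ⟨insert a s, Subset.rfl, ?_, by simp⟩
      rw [card_insert_of_notMem fun h => (ha a h).false, hn]

theorem sum_triangle_union {G : Type*} [AddCommMonoid G] {s t : Finset ι}
    (hst : ∀ i ∈ s, ∀ j ∈ t, i < j) (B : ι → ι → G) :
    ∑ i ∈ s ∪ t, ∑ j ∈ s ∪ t with i < j, B i j =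
      ∑ i ∈ s, ∑ j ∈ s with i < j, B i j + ∑ i ∈ s, ∑ j ∈ t, B i j +
        ∑ i ∈ t, ∑ j ∈ t with i < j, B i j := by
  have hdisj : Disjoint s t := disjoint_left.mpr fun i hs ht => (hst i hs i ht).false
  have row_lower : ∀ i ∈ s, ∑ j ∈ s ∪ t with i < j, B i j =
      ∑ j ∈ s with i < j, B i j + ∑ j ∈ t, B i j := fun i hi => by
    rw [filter_union, sum_union (disjoint_filter_filter hdisj), filter_true_of_mem (hst i hi)]
  have row_upper : ∀ i ∈ t, ∑ j ∈ s ∪ t with i < j, B i j = ∑ j ∈ t with i < j, B i j :=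
    fun i hi => by
      rw [filter_union, filter_false_of_mem fun j hj => (hst j hj i hi).not_gt, empty_union]
  rw [sum_union hdisj, sum_congr rfl row_lower, sum_congr rfl row_upper, sum_add_distrib]

/- Halving `s` costs one rectangle, whose bound is paid out of the total budget `∑ α + ∑ β`; the two
smaller triangles share a single copy of that budget, so every halving adds one copy. -/
theorem sum_triangle_le_of_sum_rectangle_le {B : ι → ι → ℝ} {α β : ι → ℝ}
    (hB : ∀ s t : Finset ι, Disjoint s t → ∑ i ∈ s, ∑ j ∈ t, B i j ≤ ∑ i ∈ s, α i + ∑ j ∈ t, β j)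
    {m : ℕ} {s : Finset ι} (hs : #s ≤ 2 ^ m) :
    ∑ i ∈ s, ∑ j ∈ s with i < j, B i j ≤ m * (∑ i ∈ s, α i + ∑ j ∈ s, β j) := by
  induction m generalizing s with
  | zero =>
    have hsub := card_le_one.mp (by simpa using hs)
    rw [sum_eq_zero fun i hi => ?_, Nat.cast_zero, zero_mul]
    rw [filter_false_of_mem fun j hj => (hsub j hj i hi).not_gt, sum_empty]
  | succ m ih =>
    obtain ⟨t, hts, htcard, hlt⟩ := exists_lower_subset_card_eq s (min_le_right (2 ^ m) #s)
    have hdisj : Disjoint t (s \ t) := disjoint_sdiff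
    have hunion : t ∪ s \ t = s := union_sdiff_of_subset hts
    have lower := ih (s := t) (htcard.trans_le (min_le_left _ _))
    have upper := ih (s := s \ t) (by rw [card_sdiff_of_subset hts]; omega)
    have rectangle := hB t (s \ t) hdisj
    have α_nonneg : 0 ≤ ∑ i ∈ s \ t, α i := by simpa using hB (s \ t) ∅ (disjoint_empty_right _)
    have β_nonneg : 0 ≤ ∑ j ∈ t, β j := by simpa using hB ∅ t (disjoint_empty_left _)
    have triangle := sum_triangle_union hlt B
    rw [hunion] at triangle
    rw [triangle, ← sum_sdiff hts (f := α), ← sum_sdiff hts (f := β)]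
    push_cast
    linarith

end LinearOrder

section RealEstimates

theorem nonneg_of_forall_nonneg_mul_add_sq_mul {p q : ℝ}
    (h : ∀ t : ℝ, 0 < t → t ≤ 1 → 0 ≤ t * p + t ^ 2 * q) : 0 ≤ p := by
  have hlim : Filter.Tendsto (fun t : ℝ => p + t * q) (nhdsWithin 0 (Set.Ioi 0)) (nhds p) := by
    have : Continuous fun t : ℝ => p + t * q := by fun_prop
    simpa using (this.tendsto 0).mono_left nhdsWithin_le_nhds
  refine ge_of_tendsto hlim ?_
  filter_upwards [Ioc_mem_nhdsGT one_pos] with t ⟨ht0, ht1⟩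
  refine nonneg_of_mul_nonneg_right ?_ ht0
  linarith [h t ht0 ht1]

theorem le_two_mul_div_of_sq_le_mul_sub {D : ℕ → ℝ} {C : ℝ} (hD : ∀ r, 0 ≤ D r) (h0 : D 0 ≤ C)
    (hrec : ∀ r, D (r + 1) ^ 2 ≤ C * (D r - D (r + 1))) (r : ℕ) : D r ≤ 2 * C / (r + 2) := by
  have hC : 0 ≤ C := (hD 0).trans h0
  induction r with
  | zero => simpa using h0
  | succ r ih =>
    set n : ℝ := r + 2 with hn
    have hn2 : 2 ≤ n := by simp [hn]
    have hcast : ((r + 1 : ℕ) : ℝ) + 2 = n + 1 := by push_cast; ring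
    rw [hcast, le_div_iff₀ (by linarith)]
    rw [le_div_iff₀ (by linarith)] at ih
    have hstep : D (r + 1) * (n * (D (r + 1) + C)) ≤ C * (2 * C) := by
      nlinarith [hrec r, mul_le_mul_of_nonneg_left ih hC]
    by_contra! hlarge
    have hpos : 0 < D (r + 1) := pos_of_mul_pos_left (by linarith) (by linarith : 0 ≤ n + 1)
    have hn_large : C < D (r + 1) * n := by nlinarith
    linarith [mul_lt_mul_of_pos_left hn_large hpos, mul_le_mul_of_nonneg_left hlarge.le hC]

theorem clog_two_le_two_mul_log {n : ℕ} (hn : 1 ≤ n) :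
    (Nat.clog 2 n : ℝ) ≤ 2 * Real.log (2 * n) := by
  have hn' : (1 : ℝ) ≤ n := by exact_mod_cast hn
  have hlog : 0 ≤ Real.log (2 * n) := Real.log_nonneg (by linarith)
  have hlog2 : 1 ≤ 2 * Real.log 2 := by linarith [Real.log_two_gt_d9]
  calc (Nat.clog 2 n : ℝ) = ⌈Real.logb 2 n⌉₊ := by
        rw [← Real.natCeil_logb_natCast, Nat.cast_ofNat]
    _ ≤ Real.logb 2 n + 1 := (Nat.ceil_lt_add_one (Real.logb_nonneg one_lt_two hn')).le
    _ = Real.logb 2 (2 * n) := by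
        rw [Real.logb_mul (by norm_num) (by linarith), Real.logb_self_eq_one one_lt_two, add_comm]
    _ ≤ 2 * Real.log (2 * n) := by
        rw [Real.logb, div_le_iff₀ (by linarith)]
        nlinarith

end RealEstimates

section Blocks

variable {ι : Type*} [Fintype ι] {E : ι → Type*}

theorem sum_apply_update_sub [DecidableEq ι] {G : Type*} [AddCommGroup G]
    (φ : ∀ k, E k → G) (w : ∀ k, E k) (k : ι) (y z : E k) :
    ∑ j, φ j (Function.update w k y j) - ∑ j, φ j (Function.update w k z j) = φ k y - φ k z := by
  simp only [Function.apply_update φ, sum_update_of_mem (mem_univ k), add_sub_add_right_eq_sub]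

theorem sum_apply_piecewise_piecewise_zero [DecidableEq ι] [∀ k, Zero (E k)] {G : Type*}
    [AddCommMonoid G] (φ : ∀ k, E k → G) (hφ : ∀ k, φ k 0 = 0) {s t : Finset ι}
    (hst : Disjoint s t) (u d : ∀ k, E k) :
    ∑ k, φ k (s.piecewise u (t.piecewise d 0) k) = ∑ i ∈ s, φ i (u i) + ∑ j ∈ t, φ j (d j) := by
  have outside : ∀ k ∉ s ∪ t, φ k (s.piecewise u (t.piecewise d 0) k) = 0 := fun k hk => by
    rw [mem_union, not_or] at hk
    simp [hk, hφ]
  rw [← sum_subset (subset_univ (s ∪ t)) fun k _ hk => outside k hk, sum_union hst]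
  congr 1
  · exact sum_congr rfl fun i hi => by simp [hi]
  · exact sum_congr rfl fun j hj => by simp [hj, disjoint_right.mp hst hj]

variable [LinearOrder ι]

/-- One sweep of cyclic exact block minimisation of `f` over `∏ k, X k`, leading from `x` to `xp`:
the block `k` is minimised with the blocks `j < k` already at `xp j` and the later ones still at
`x j`. -/
def IsExactSweep (f : (∀ k, E k) → ℝ) (X : ∀ k, Set (E k)) (x xp : ∀ k, E k) :
    Prop :=
  ∀ k, xp k ∈ X k ∧ IsMinOn
    (fun y => f (Function.update (({j | j < k} : Finset ι).piecewise xp x) k y)) (X k) (xp k)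

theorem update_piecewise_lt (x xp : ∀ k, E k) (k : ι) :
    Function.update (({j | j < k} : Finset ι).piecewise xp x) k (xp k) =
      ({j | j ≤ k} : Finset ι).piecewise xp x := by
  have hinsert : ({j | j ≤ k} : Finset ι) = insert k ({j | j < k} : Finset ι) := by
    ext j
    simp [le_iff_eq_or_lt]
  rw [hinsert, piecewise_insert]

end Blocks

section BlockLeastSquares

variable {ι : Type*} [Fintype ι] {E : ι → Type*} [∀ k, AddCommGroup (E k)] [∀ k, Module ℝ (E k)]
  {F : Type*} [NormedAddCommGroup F] [InnerProductSpace ℝ F]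

/-- The residual of the linear system `∑ k, T k (x k) = b` at the block vector `x`. -/
def blockResidual (T : ∀ k, E k →ₗ[ℝ] F) (b : F) (x : ∀ k, E k) : F :=
  ∑ k, T k (x k) - b

/-- The least-squares objective `½ ‖∑ k, T k (x k) - b‖² + ∑ k, h k (x k)` with one regulariser
`h k` per block. The blocks `E k` carry no topology: only their images in `F` are measured. -/
noncomputable def blockObjective (T : ∀ k, E k →ₗ[ℝ] F) (b : F) (h : ∀ k, E k → ℝ)
    (x : ∀ k, E k) : ℝ :=
  1 / 2 * ‖blockResidual T b x‖ ^ 2 + ∑ k, h k (x k)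

variable {T : ∀ k, E k →ₗ[ℝ] F} {b : F} {h : ∀ k, E k → ℝ} {X : ∀ k, Set (E k)}

theorem blockObjective_sub_le (x y : ∀ k, E k) :
    blockObjective T b h x - blockObjective T b h y ≤
      ∑ k, (⟪blockResidual T b x, T k (x k - y k)⟫ + (h k (x k) - h k (y k))) := by
  have hres : blockResidual T b y = blockResidual T b x - ∑ k, T k (x k - y k) := by
    simp only [blockResidual, map_sub, sum_sub_distrib]
    abel
  rw [sum_add_distrib, ← inner_sum, sum_sub_distrib, blockObjective, blockObjective, hres,
    norm_sub_sq_real]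
  linarith [sq_nonneg ‖∑ k, T k (x k - y k)‖]

section Update

variable [DecidableEq ι]

theorem blockResidual_update (w : ∀ k, E k) (k : ι) (y z : E k) :
    blockResidual T b (Function.update w k y) =
      blockResidual T b (Function.update w k z) + T k (y - z) := by
  rw [map_sub, ← sum_apply_update_sub (fun j => T j) w k y z, blockResidual, blockResidual]
  abel

theorem blockObjective_update_sub (w : ∀ k, E k) (k : ι) (y z : E k) :
    blockObjective T b h (Function.update w k y) - blockObjective T b h (Function.update w k z) =
      ⟪blockResidual T b (Function.update w k z), T k (y - z)⟫ + 1 / 2 * ‖T k (y - z)‖ ^ 2 +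
        (h k y - h k z) := by
  rw [← sum_apply_update_sub h w k y z, blockObjective, blockObjective,
    blockResidual_update w k y z, norm_add_sq_real]
  ring

/- First-order optimality of the block `k`, obtained by moving from `z` a little towards `y`. -/
theorem inner_blockResidual_add_sub_nonneg {w : ∀ k, E k} {k : ι} {y z : E k}
    (hh : ConvexOn ℝ (X k) (h k)) (hz : z ∈ X k) (hy : y ∈ X k)
    (hmin : IsMinOn (fun y => blockObjective T b h (Function.update w k y)) (X k) z) :
    0 ≤ ⟪blockResidual T b (Function.update w k z), T k (y - z)⟫ + (h k y - h k z) := by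
  refine nonneg_of_forall_nonneg_mul_add_sq_mul (q := 1 / 2 * ‖T k (y - z)‖ ^ 2) fun t ht0 ht1 => ?_
  have hmem : (1 - t) • z + t • y ∈ X k := hh.1 hz hy (by linarith) ht0.le (by ring)
  have hconv := hh.2 hz hy (by linarith : 0 ≤ 1 - t) ht0.le (by ring)
  have hobj := blockObjective_update_sub (T := T) (b := b) (h := h) w k ((1 - t) • z + t • y) z
  have hdir : (1 - t) • z + t • y - z = t • (y - z) := by module
  rw [hdir, map_smul, real_inner_smul_right, norm_smul, mul_pow, Real.norm_eq_abs, sq_abs] at hobj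
  simp only [smul_eq_mul] at hconv
  linarith [isMinOn_iff.mp hmin _ hmem]

theorem half_norm_sq_le_blockObjective_update_sub {w : ∀ k, E k} {k : ι} {y z : E k}
    (hh : ConvexOn ℝ (X k) (h k)) (hz : z ∈ X k) (hy : y ∈ X k)
    (hmin : IsMinOn (fun y => blockObjective T b h (Function.update w k y)) (X k) z) :
    1 / 2 * ‖T k (y - z)‖ ^ 2 ≤ blockObjective T b h (Function.update w k y) -
      blockObjective T b h (Function.update w k z) := by
  rw [blockObjective_update_sub]
  linarith [inner_blockResidual_add_sub_nonneg hh hz hy hmin]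

theorem blockResidual_piecewise (s : Finset ι) (x xp : ∀ k, E k) :
    blockResidual T b (s.piecewise xp x) =
      blockResidual T b xp - ∑ j ∈ sᶜ, T j (xp j - x j) := by
  have hsum : ∑ j, T j (s.piecewise xp x j) = ∑ j ∈ s, T j (xp j) + ∑ j ∈ sᶜ, T j (x j) := by
    rw [← sum_add_sum_compl s]
    congr 1
    · exact sum_congr rfl fun j hj => by rw [piecewise_eq_of_mem _ _ _ hj]
    · exact sum_congr rfl fun j hj => by rw [piecewise_eq_of_notMem _ _ _ (mem_compl.mp hj)]
  rw [blockResidual, hsum, blockResidual, ← sum_add_sum_compl s fun j => T j (xp j)]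
  simp only [map_sub, sum_sub_distrib]
  abel

end Update

section Sweep

variable [LinearOrder ι] {x xp : ∀ k, E k}

theorem IsExactSweep.half_sum_norm_sq_le (hstep : IsExactSweep (blockObjective T b h) X x xp)
    (hh : ∀ k, ConvexOn ℝ (X k) (h k)) (hx : ∀ k, x k ∈ X k) :
    1 / 2 * ∑ k, ‖T k (xp k - x k)‖ ^ 2 ≤ blockObjective T b h x - blockObjective T b h xp := by
  let Φ : Finset ι → ℝ := fun s => blockObjective T b h (s.piecewise xp x)
  have hblock : ∀ k, 1 / 2 * ‖T k (xp k - x k)‖ ^ 2 ≤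
      -(Φ {j | j ≤ k} - Φ {j | j < k}) := fun k => by
    have hdesc := half_norm_sq_le_blockObjective_update_sub (hh k) (hstep k).1 (hx k) (hstep k).2
    have hbefore : Function.update (({j | j < k} : Finset ι).piecewise xp x) k (x k) =
        ({j | j < k} : Finset ι).piecewise xp x := by simp
    rwa [hbefore, update_piecewise_lt, ← neg_sub (xp k), map_neg, norm_neg,
      ← neg_sub (Φ _)] at hdesc
  calc 1 / 2 * ∑ k, ‖T k (xp k - x k)‖ ^ 2
      ≤ ∑ k, -(Φ {j | j ≤ k} - Φ {j | j < k}) := by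
        rw [mul_sum]
        exact sum_le_sum fun k _ => hblock k
    _ = Φ ∅ - Φ univ := by
        rw [sum_neg_distrib, sum_filter_le_sub_filter_lt, neg_sub]
    _ = blockObjective T b h x - blockObjective T b h xp := by
        simp only [Φ, piecewise_empty, piecewise_univ]

theorem IsExactSweep.sub_le_sum_inner (hstep : IsExactSweep (blockObjective T b h) X x xp)
    (hh : ∀ k, ConvexOn ℝ (X k) (h k)) {y : ∀ k, E k} (hy : ∀ k, y k ∈ X k) :
    blockObjective T b h xp - blockObjective T b h y ≤
      ∑ i, ∑ j with i < j, ⟪T i (xp i - y i), T j (xp j - x j)⟫ := by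
  refine (blockObjective_sub_le xp y).trans (sum_le_sum fun i _ => ?_)
  have hopt := inner_blockResidual_add_sub_nonneg (hh i) (hstep i).1 (hy i) (hstep i).2
  have hlater : ({j | j ≤ i} : Finset ι)ᶜ = ({j | i < j} : Finset ι) := by
    ext j
    simp
  rw [update_piecewise_lt, blockResidual_piecewise, hlater, ← neg_sub (xp i), map_neg,
    inner_neg_right, inner_sub_left, real_inner_comm _ (∑ j with i < j, _), inner_sum] at hopt
  linarith

end Sweep

section Rate

variable {p : ∀ k, Seminorm ℝ (E k)} {L : ℝ}

theorem sum_rectangle_inner_le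
    (hL : ∀ v : ∀ k, E k, ‖∑ k, T k (v k)‖ ^ 2 ≤ L * ∑ k, p k (v k) ^ 2)
    (u d : ∀ k, E k) {s t : Finset ι} (hst : Disjoint s t) :
    ∑ i ∈ s, ∑ j ∈ t, ⟪T i (u i), T j (d j)⟫ ≤
      ∑ i ∈ s, L / 4 * p i (u i) ^ 2 + ∑ j ∈ t, L / 4 * p j (d j) ^ 2 := by
  classical
  have hnorm := hL (s.piecewise u (t.piecewise d 0))
  rw [sum_apply_piecewise_piecewise_zero (fun k => T k) (by simp) hst,
    sum_apply_piecewise_piecewise_zero (fun k v => p k v ^ 2) (by simp) hst] at hnorm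
  simp only [← inner_sum, ← sum_inner, ← mul_sum]
  have polarization := norm_add_sq_real (∑ i ∈ s, T i (u i)) (∑ j ∈ t, T j (d j))
  have hdiff := norm_sub_sq_real (∑ i ∈ s, T i (u i)) (∑ j ∈ t, T j (d j))
  linarith [sq_nonneg ‖∑ i ∈ s, T i (u i) - ∑ j ∈ t, T j (d j)‖]

variable [LinearOrder ι]

/- The additive bound for the pairs `(c • u, d)`, `c : ℝ`, is a quadratic inequality in `c`, and its
discriminant gives the multiplicative one. -/
theorem sq_sum_triangle_inner_le
    (hL : ∀ v : ∀ k, E k, ‖∑ k, T k (v k)‖ ^ 2 ≤ L * ∑ k, p k (v k) ^ 2)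
    (u d : ∀ k, E k) {m : ℕ} (hm : Fintype.card ι ≤ 2 ^ m) :
    (∑ i, ∑ j with i < j, ⟪T i (u i), T j (d j)⟫) ^ 2 ≤
      (m / 2 * L) ^ 2 * ((∑ k, p k (u k) ^ 2) * ∑ k, p k (d k) ^ 2) := by
  set S := ∑ i, ∑ j with i < j, ⟪T i (u i), T j (d j)⟫
  set α := ∑ k, p k (u k) ^ 2
  set β := ∑ k, p k (d k) ^ 2
  have additive : ∀ c : ℝ, c * S ≤ m * (L / 4 * (c ^ 2 * α) + L / 4 * β) := fun c => by
    have hc := sum_triangle_le_of_sum_rectangle_le (m := m) (s := univ)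
      (fun _ _ hst => sum_rectangle_inner_le hL (c • u) d hst) (by rwa [card_univ])
    simpa only [Pi.smul_apply, map_smul, real_inner_smul_left, map_smul_eq_mul, Real.norm_eq_abs,
      mul_pow, sq_abs, ← mul_sum] using hc
  have hdiscrim := discrim_le_zero (a := m * (L / 4) * α) (b := -S) (c := m * (L / 4) * β)
    fun c => by linarith [additive c]
  unfold discrim at hdiscrim
  linarith

theorem IsExactSweep.sq_sub_le {x xp y : ∀ k, E k} {s R : ℝ}
    (hstep : IsExactSweep (blockObjective T b h) X x xp) (hh : ∀ k, ConvexOn ℝ (X k) (h k))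
    (hs : s ≠ 0) (hsT : ∀ k v, s ^ 2 * p k v ^ 2 ≤ ‖T k v‖ ^ 2)
    (hL : ∀ v : ∀ k, E k, ‖∑ k, T k (v k)‖ ^ 2 ≤ L * ∑ k, p k (v k) ^ 2)
    (hx : ∀ k, x k ∈ X k) (hy : ∀ k, y k ∈ X k)
    (hle : blockObjective T b h y ≤ blockObjective T b h xp)
    (hR : √(∑ k, p k (xp k - y k) ^ 2) ≤ R) :
    (blockObjective T b h xp - blockObjective T b h y) ^ 2 ≤
      (Nat.clog 2 (Fintype.card ι) * L * R) ^ 2 / (2 * s ^ 2) *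
        (blockObjective T b h x - blockObjective T b h xp) := by
  set m := Nat.clog 2 (Fintype.card ι)
  set δ := blockObjective T b h x - blockObjective T b h xp
  have hs2 : 0 < s ^ 2 := by positivity
  have distance : ∑ k, p k (xp k - y k) ^ 2 ≤ R ^ 2 := (Real.sqrt_le_iff.mp hR).2
  have displacement : ∑ k, p k (xp k - x k) ^ 2 ≤ 2 * δ / s ^ 2 := by
    rw [le_div_iff₀ hs2, mul_comm, mul_sum]
    linarith [hstep.half_sum_norm_sq_le hh hx,
      sum_le_sum fun k (_ : k ∈ univ) => hsT k (xp k - x k)]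
  calc (blockObjective T b h xp - blockObjective T b h y) ^ 2
      ≤ (∑ i, ∑ j with i < j, ⟪T i (xp i - y i), T j (xp j - x j)⟫) ^ 2 :=
        pow_le_pow_left₀ (sub_nonneg.mpr hle) (hstep.sub_le_sum_inner hh hy) 2
    _ ≤ (m / 2 * L) ^ 2 * ((∑ k, p k (xp k - y k) ^ 2) * ∑ k, p k (xp k - x k) ^ 2) :=
        sq_sum_triangle_inner_le hL (fun k => xp k - y k) (fun k => xp k - x k)
          (Nat.le_pow_clog one_lt_two _)
    _ ≤ (m / 2 * L) ^ 2 * (R ^ 2 * (2 * δ / s ^ 2)) := by gcongr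
    _ = (m * L * R) ^ 2 / (2 * s ^ 2) * δ := by
        field_simp

theorem bcd_rate_col_rank_general (hh : ∀ k, ConvexOn ℝ (X k) (h k)) {s R : ℝ} (hs : s ≠ 0)
    (hsT : ∀ k v, s ^ 2 * p k v ^ 2 ≤ ‖T k v‖ ^ 2)
    (hL : ∀ v : ∀ k, E k, ‖∑ k, T k (v k)‖ ^ 2 ≤ L * ∑ k, p k (v k) ^ 2)
    (x : ℕ → ∀ k, E k) (hx0 : ∀ k, x 0 k ∈ X k)
    (hstep : ∀ r, IsExactSweep (blockObjective T b h) X (x r) (x (r + 1)))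
    (xstar : ∀ k, E k) (hxstarX : ∀ k, xstar k ∈ X k)
    (hxstar : ∀ y : ∀ k, E k, (∀ k, y k ∈ X k) →
      blockObjective T b h xstar ≤ blockObjective T b h y)
    (hR : ∀ z : ∀ k, E k, (∀ k, z k ∈ X k) → blockObjective T b h z ≤ blockObjective T b h (x 0) →
      √(∑ k, p k (z k - xstar k) ^ 2) ≤ R)
    (r : ℕ) :
    blockObjective T b h (x r) - blockObjective T b h xstar ≤
      2 * max (blockObjective T b h (x 0) - blockObjective T b h xstar)
        ((Nat.clog 2 (Fintype.card ι) * L * R) ^ 2 / (2 * s ^ 2)) / (r + 2) := by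
  have feasible : ∀ r k, x r k ∈ X k
    | 0 => hx0
    | r + 1 => fun k => (hstep r k).1
  have descent : ∀ r, blockObjective T b h (x (r + 1)) ≤ blockObjective T b h (x r) := fun r => by
    have hdecrease := (hstep r).half_sum_norm_sq_le hh (feasible r)
    have hnonneg : 0 ≤ ∑ k, ‖T k (x (r + 1) k - x r k)‖ ^ 2 := by positivity
    linarith
  have sublevel : ∀ r, blockObjective T b h (x r) ≤ blockObjective T b h (x 0) := fun r =>
    antitone_nat_of_succ_le (f := fun r => blockObjective T b h (x r)) descent r.zero_le
  refine le_two_mul_div_of_sq_le_mul_sub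
    (D := fun r => blockObjective T b h (x r) - blockObjective T b h xstar)
    (fun r => sub_nonneg.mpr (hxstar _ (feasible r))) (le_max_left _ _) (fun r => ?_) r
  rw [sub_sub_sub_cancel_right]
  exact ((hstep r).sq_sub_le hh hs hsT hL (feasible r) hxstarX (hxstar _ (feasible _))
    (hR _ (feasible _) (sublevel _))).trans
      (mul_le_mul_of_nonneg_right (le_max_right _ _) (sub_nonneg.mpr (descent r)))

end Rate

end BlockLeastSquares

section UnitSphere

variable {V : Type*} [AddCommGroup V] [Module ℝ V] {n q : V → ℝ}

theorem homogeneous_normalize (hn : ∀ (t : ℝ) v, n (t • v) = t ^ 2 * n v)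
    (hq : ∀ (t : ℝ) v, q (t • v) = t ^ 2 * q v) {v : V} (hv : 0 < n v) :
    n ((√(n v))⁻¹ • v) = 1 ∧ q ((√(n v))⁻¹ • v) = q v / n v := by
  rw [hn, hq, inv_pow, Real.sq_sqrt hv.le]
  exact ⟨inv_mul_cancel₀ hv.ne', inv_mul_eq_div _ _⟩

theorem sInf_unit_sphere_mul_le (hn : ∀ (t : ℝ) v, n (t • v) = t ^ 2 * n v)
    (hq : ∀ (t : ℝ) v, q (t • v) = t ^ 2 * q v) (hn0 : ∀ v, 0 ≤ n v) (hq0 : ∀ v, 0 ≤ q v) (v : V) :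
    sInf {r | ∃ w, n w = 1 ∧ r = q w} * n v ≤ q v := by
  obtain hv | hv := (hn0 v).eq_or_lt
  · simpa [← hv] using hq0 v
  · obtain ⟨hunit, hquot⟩ := homogeneous_normalize hn hq hv
    rw [← le_div_iff₀ hv]
    exact csInf_le ⟨0, by rintro _ ⟨w, -, rfl⟩; exact hq0 w⟩ ⟨_, hunit, hquot.symm⟩

theorem le_sSup_unit_sphere_mul (hn : ∀ (t : ℝ) v, n (t • v) = t ^ 2 * n v)
    (hq : ∀ (t : ℝ) v, q (t • v) = t ^ 2 * q v) (hn0 : ∀ v, 0 ≤ n v) {c : ℝ}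
    (hc : ∀ v, q v ≤ c * n v) (v : V) :
    q v ≤ sSup {r | ∃ w, n w = 1 ∧ r = q w} * n v := by
  obtain hv | hv := (hn0 v).eq_or_lt
  · simpa [← hv] using hc v
  · obtain ⟨hunit, hquot⟩ := homogeneous_normalize hn hq hv
    rw [← div_le_iff₀ hv]
    refine le_csSup ⟨c, ?_⟩ ⟨_, hunit, hquot.symm⟩
    rintro _ ⟨w, hw, rfl⟩
    simpa [hw] using hc w

end UnitSphere

section Matrices

variable {K M N : ℕ}

theorem sqnorm_nonneg (v : Fin N → ℝ) : 0 ≤ sqnorm v :=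
  sum_nonneg fun i _ => sq_nonneg (v i)

theorem sqnorm_smul (t : ℝ) (v : Fin N → ℝ) : sqnorm (t • v) = t ^ 2 * sqnorm v := by
  simp only [sqnorm, Pi.smul_apply, smul_eq_mul, mul_pow, mul_sum]

theorem lamMinQ_mul_sqnorm_le (A : Matrix (Fin M) (Fin N) ℝ) (v : Fin N → ℝ) :
    lamMinQ A * sqnorm v ≤ sqnorm (A.mulVec v) :=
  sInf_unit_sphere_mul_le (q := fun v => sqnorm (A.mulVec v)) sqnorm_smul
    (fun t v => by rw [Matrix.mulVec_smul, sqnorm_smul]) sqnorm_nonneg (fun v => sqnorm_nonneg _) v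

theorem sqnorm_sum_mulVec_le (A : Fin K → Matrix (Fin M) (Fin N) ℝ) (v : Fin K → Fin N → ℝ) :
    sqnorm (∑ k, (A k).mulVec (v k)) ≤
      (∑ i, ∑ p : Fin K × Fin N, A p.1 i p.2 ^ 2) * ∑ k, sqnorm (v k) := by
  have hentry : ∀ i, (∑ k, (A k).mulVec (v k)) i = ∑ p : Fin K × Fin N, A p.1 i p.2 * v p.1 p.2 :=
    fun i => by
      rw [Fintype.sum_prod_type, Finset.sum_apply]
      rfl
  have hnorm : ∑ k, sqnorm (v k) = ∑ p : Fin K × Fin N, v p.1 p.2 ^ 2 := by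
    rw [Fintype.sum_prod_type]
    rfl
  rw [hnorm, sum_mul]
  refine sum_le_sum fun i _ => ?_
  rw [hentry]
  exact sum_mul_sq_le_sq_mul_sq _ _ _

theorem sqnorm_sum_mulVec_le_lamMaxBlock_mul (A : Fin K → Matrix (Fin M) (Fin N) ℝ)
    (v : Fin K → Fin N → ℝ) :
    sqnorm (∑ k, (A k).mulVec (v k)) ≤ lamMaxBlock A * ∑ k, sqnorm (v k) :=
  le_sSup_unit_sphere_mul (n := fun v : Fin K → Fin N → ℝ => ∑ k, sqnorm (v k))
    (q := fun v => sqnorm (∑ k, (A k).mulVec (v k)))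
    (fun t v => by simp only [Pi.smul_apply, sqnorm_smul, mul_sum])
    (fun t v => by simp only [Pi.smul_apply, Matrix.mulVec_smul, ← smul_sum, sqnorm_smul])
    (fun v => sum_nonneg fun k _ => sqnorm_nonneg (v k)) (sqnorm_sum_mulVec_le A) v

/-- The Euclidean norm on `Fin N → ℝ`, whose own norm in Mathlib is the supremum norm. -/
noncomputable def euclideanSeminorm (N : ℕ) : Seminorm ℝ (Fin N → ℝ) :=
  (normSeminorm ℝ (EuclideanSpace ℝ (Fin N))).comp
    (WithLp.linearEquiv 2 ℝ (Fin N → ℝ)).symm.toLinearMap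

/-- Multiplication by the matrix `A`, with values in the Euclidean space so that images can be
measured by the Euclidean norm. -/
noncomputable def mulVecEuclidean (A : Matrix (Fin M) (Fin N) ℝ) :
    (Fin N → ℝ) →ₗ[ℝ] EuclideanSpace ℝ (Fin M) :=
  (WithLp.linearEquiv 2 ℝ (Fin M → ℝ)).symm.toLinearMap ∘ₗ A.mulVecLin

theorem norm_toLp_sq (v : Fin N → ℝ) : ‖WithLp.toLp 2 v‖ ^ 2 = sqnorm v :=
  EuclideanSpace.real_norm_sq_eq _

theorem euclideanSeminorm_sq (v : Fin N → ℝ) : euclideanSeminorm N v ^ 2 = sqnorm v :=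
  norm_toLp_sq v

theorem norm_mulVecEuclidean_sq (A : Matrix (Fin M) (Fin N) ℝ) (v : Fin N → ℝ) :
    ‖mulVecEuclidean A v‖ ^ 2 = sqnorm (A.mulVec v) :=
  norm_toLp_sq _

theorem sum_mulVecEuclidean (A : Fin K → Matrix (Fin M) (Fin N) ℝ) (v : Fin K → Fin N → ℝ) :
    ∑ k, mulVecEuclidean (A k) (v k) = WithLp.toLp 2 (∑ k, (A k).mulVec (v k)) :=
  (map_sum (WithLp.linearEquiv 2 ℝ (Fin M → ℝ)).symm (fun k => (A k).mulVec (v k)) univ).symm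

theorem fq_eq_blockObjective (A : Fin K → Matrix (Fin M) (Fin N) ℝ) (b : Fin M → ℝ)
    (h : Fin K → (Fin N → ℝ) → ℝ) :
    fq A b h = blockObjective (fun k => mulVecEuclidean (A k)) (WithLp.toLp 2 b) h := by
  funext x
  rw [fq, gq, blockObjective, blockResidual, sum_mulVecEuclidean, ← WithLp.toLp_sub, norm_toLp_sq,
    resid]

theorem BCDStep.isExactSweep {A : Fin K → Matrix (Fin M) (Fin N) ℝ} {b : Fin M → ℝ}
    {h : Fin K → (Fin N → ℝ) → ℝ} {X : Fin K → Set (Fin N → ℝ)} {x xp : Fin K → Fin N → ℝ}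
    (hstep : BCDStep A b h X x xp) :
    IsExactSweep (blockObjective (fun k => mulVecEuclidean (A k)) (WithLp.toLp 2 b) h) X x xp := by
  rw [← fq_eq_blockObjective]
  intro k
  have hpoint : ({j | j < k} : Finset (Fin K)).piecewise xp x = wpt x xp k := by
    funext j
    simp [wpt, piecewise]
  rw [hpoint]
  exact ⟨(hstep k).1, isMinOn_iff.mpr (hstep k).2⟩

theorem minOf_pos {hK : 1 ≤ K} {σ : Fin K → ℝ} (hσ : ∀ k, 0 < σ k) : 0 < minOf hK σ :=
  (lt_inf'_iff _).mpr fun k _ => hσ k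

theorem minOf_sq_mul_euclideanSeminorm_sq_le {hK : 1 ≤ K} {A : Fin K → Matrix (Fin M) (Fin N) ℝ}
    {σ : Fin K → ℝ} (hσ : ∀ k, 0 < σ k) (hrank : ∀ k, σ k ^ 2 ≤ lamMinQ (A k)) (k : Fin K)
    (v : Fin N → ℝ) :
    minOf hK σ ^ 2 * euclideanSeminorm N v ^ 2 ≤ ‖mulVecEuclidean (A k) v‖ ^ 2 := by
  have hmin : minOf hK σ ^ 2 ≤ lamMinQ (A k) :=
    (pow_le_pow_left₀ (minOf_pos hσ).le (inf'_le _ (mem_univ k)) 2).trans (hrank k)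
  rw [euclideanSeminorm_sq, norm_mulVecEuclidean_sq]
  exact (mul_le_mul_of_nonneg_right hmin (sqnorm_nonneg v)).trans (lamMinQ_mul_sqnorm_le (A k) v)

theorem norm_sum_mulVecEuclidean_sq_le (A : Fin K → Matrix (Fin M) (Fin N) ℝ)
    (v : Fin K → Fin N → ℝ) :
    ‖∑ k, mulVecEuclidean (A k) (v k)‖ ^ 2 ≤
      lamMaxBlock A * ∑ k, euclideanSeminorm N (v k) ^ 2 := by
  simp only [euclideanSeminorm_sq, sum_mulVecEuclidean, norm_toLp_sq]
  exact sqnorm_sum_mulVec_le_lamMaxBlock_mul A v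

theorem clog_rate_constant_le (hK : 1 ≤ K) (hN : 1 ≤ N) (L Lmax R s : ℝ) :
    (Nat.clog 2 K * L * R) ^ 2 / (2 * s ^ 2) ≤
      2 * R ^ 2 * (1 / s ^ 2) * Real.log (2 * (N : ℝ) * (K : ℝ)) ^ 2 * (L ^ 2 + Lmax ^ 2) := by
  have hN' : (1 : ℝ) ≤ N := by exact_mod_cast hN
  have hlog : (Nat.clog 2 K : ℝ) ≤ 2 * Real.log (2 * (N : ℝ) * (K : ℝ)) :=
    (clog_two_le_two_mul_log hK).trans <| by
      gcongr
      linarith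
  calc (Nat.clog 2 K * L * R) ^ 2 / (2 * s ^ 2)
      = R ^ 2 * (1 / s ^ 2) / 2 * (Nat.clog 2 K : ℝ) ^ 2 * L ^ 2 := by ring
    _ ≤ R ^ 2 * (1 / s ^ 2) / 2 * (2 * Real.log (2 * (N : ℝ) * (K : ℝ))) ^ 2 *
          (L ^ 2 + Lmax ^ 2) := by
        gcongr
        exact le_add_of_nonneg_right (sq_nonneg Lmax)
    _ = _ := by ring

end Matrices

/-- Theorem 2, case 1: iteration complexity of cyclic exact BCD
when each `A_k` has full column rank with `λ_min(A_kᵀA_k) ≥ σ_k²`. -/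
theorem bcd_rate_col_rank {K M N : ℕ} (hK : 1 ≤ K) (hM : 1 ≤ M) (hN : 1 ≤ N)
    (hNK : 3 ≤ N * K)
    (A : Fin K → Matrix (Fin M) (Fin N) ℝ) (b : Fin M → ℝ)
    (σ : Fin K → ℝ) (hσ : ∀ k, 0 < σ k) (hrank : ∀ k, σ k ^ 2 ≤ lamMinQ (A k))
    (X : Fin K → Set (Fin N → ℝ)) (h : Fin K → (Fin N → ℝ) → ℝ)
    (hXne : ∀ k, (X k).Nonempty) (hXcl : ∀ k, IsClosed (X k))
    (hXcv : ∀ k, Convex ℝ (X k))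
    (hhcv : ∀ k, ConvexOn ℝ Set.univ (h k))
    (hhlsc : ∀ k, LowerSemicontinuous (h k))
    (x : ℕ → Fin K → Fin N → ℝ) (hx0 : ∀ k, x 0 k ∈ X k)
    (hstep : ∀ r : ℕ, BCDStep A b h X (x r) (x (r + 1)))
    (xstar : Fin K → Fin N → ℝ) (hxstarX : ∀ k, xstar k ∈ X k)
    (hxstar : ∀ y : Fin K → Fin N → ℝ, (∀ k, y k ∈ X k) → fq A b h xstar ≤ fq A b h y)
    (R0 : ℝ)
    (hR0 : ∀ z : Fin K → Fin N → ℝ, (∀ k, z k ∈ X k) → fq A b h z ≤ fq A b h (x 0) →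
      ∀ y : Fin K → Fin N → ℝ, (∀ k, y k ∈ X k) →
        (∀ z' : Fin K → Fin N → ℝ, (∀ k, z' k ∈ X k) → fq A b h y ≤ fq A b h z') →
        Real.sqrt (∑ k, sqnorm (z k - y k)) ≤ R0)
    (r : ℕ) :
    fq A b h (x (r + 1)) - fq A b h xstar ≤
      3 * max (fq A b h (x 0) - fq A b h xstar)
          (2 * R0 ^ 2 * (1 / minOf hK σ ^ 2) * Real.log (2 * (N : ℝ) * (K : ℝ)) ^ 2 *
            (lamMaxBlock A ^ 2 + maxOf hK (fun k => lamMaxQ (A k)) ^ 2)) /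
        (r + 1) := by
  simp only [fq_eq_blockObjective, ← euclideanSeminorm_sq] at hxstar hR0 ⊢
  refine (bcd_rate_col_rank_general (fun k => (hhcv k).subset (Set.subset_univ _) (hXcv k))
    (minOf_pos (hK := hK) hσ).ne' (minOf_sq_mul_euclideanSeminorm_sq_le hσ hrank)
    (norm_sum_mulVecEuclidean_sq_le A) x hx0 (fun r => (hstep r).isExactSweep) xstar hxstarX hxstar
    (fun z hz hz0 => hR0 z hz hz0 xstar hxstarX hxstar) (r + 1)).trans ?_
  have hgap := sub_nonneg.mpr (hxstar _ hx0)
  rw [Fintype.card_fin]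
  gcongr
  · norm_num
  · exact clog_rate_constant_le hK hN ..
  · simp
  · norm_num
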